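/- Let (S^1,S^2) be a Lax–Sato pair satisfying the generating Lax–Sato equations and admitting a τ-function Θ, and let σ ∈ R be a wave function with constant parameter p. Then σ is an infinitesimal symmetry of the generating heavenly equation: D^2(z)σ_x − D^1(z)σ_y − {D^1(z)σ, D^2(z)Θ} − {D^1(z)Θ, D^2(z)σ} = 0, coefficientwise in z^{−1} (i.e. δΘ = σ satisfies the linearization of the equation D^2(z)Θ_x − D^1(z)Θ_y − {D^1(z)Θ, D^2(z)Θ} = 0). -/

import Mathlib

/-!
Common setup for the second heavenly equation hierarchy (Bogdanov–Konopelchenko).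

Formal series in `z` with `z`-exponents bounded above are encoded as Hahn series
over `ℤ` in the variable `w = z⁻¹`: the coefficient at `n : ℤ` of `A : LS R` is
the coefficient of `z^{-n}` of the corresponding series.
-/

noncomputable section

/-- Series in `z` with `z`-exponents bounded above (the coefficient at `n : ℤ`
is the coefficient of `z^{-n}`). -/
abbrev LS (R : Type*) [CommRing R] : Type _ := HahnSeries ℤ R

/-- The variable `z`. -/
def zz {R : Type*} [CommRing R] : LS R := HahnSeries.single (-1 : ℤ) (1 : R)

/-- Constant series. -/
def CC {R : Type*} [CommRing R] (r : R) : LS R := HahnSeries.C r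

/-- `tail g = Σ_{k≥0} (g k) · z^{-(k+1)}` : a series in negative powers of `z`. -/
def tail {R : Type*} [CommRing R] (g : ℕ → R) : LS R :=
  HahnSeries.single (1 : ℤ) (1 : R) * HahnSeries.ofPowerSeries ℤ R (PowerSeries.mk g)

/-- `geom v = 1/(z - v) := Σ_{k≥0} v^k z^{-(k+1)}`. -/
def geom {R : Type*} [CommRing R] (v : R) : LS R := tail fun k => v ^ k

/-- The projection `(·)_-` keeping only negative powers of `z`. -/
def truncMinus {R : Type*} [CommRing R] (A : LS R) : LS R where
  coeff n := if 1 ≤ n then A.coeff n else 0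
  isPWO_support' := A.isPWO_support'.mono (fun n hn => by
    by_cases h : (1:ℤ) ≤ n <;> simp_all [Function.mem_support])

/-- The projection `(·)_+` keeping only nonnegative powers of `z`. -/
def truncPlus {R : Type*} [CommRing R] (A : LS R) : LS R where
  coeff n := if n ≤ 0 then A.coeff n else 0
  isPWO_support' := A.isPWO_support'.mono (fun n hn => by
    by_cases h : n ≤ (0:ℤ) <;> simp_all [Function.mem_support])

/-- A commutative ring equipped with pairwise commuting derivations `∂^{j+1}_n`
(`j : Fin 2`, `n : ℕ`) and distinguished elements `t^{j+1}_n` satisfying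
`∂^j_m t^k_n = δ_{jk} δ_{mn}`. -/
structure HeavenlySetting (R : Type*) [CommRing R] where
  d : Fin 2 → ℕ → R → R
  d_add : ∀ j n a b, d j n (a + b) = d j n a + d j n b
  d_mul : ∀ j n a b, d j n (a * b) = a * d j n b + d j n a * b
  d_comm : ∀ j n k m a, d j n (d k m a) = d k m (d j n a)
  t : Fin 2 → ℕ → R
  d_t : ∀ j n k m, d j n (t k m) = if j = k ∧ n = m then 1 else 0

/-- The data of a Lax–Sato pair: `Sneg j n` is the coefficient `S^{j+1}_{n+1}`
of `z^{-(n+1)}` in `S^{j+1} = Σ_{n≥0} t^{j+1}_n z^n + Σ_{n≥1} S^{j+1}_n z^{-n}`. -/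
structure LaxPair (R : Type*) [CommRing R] where
  Sneg : Fin 2 → ℕ → R

namespace HeavenlySetting

variable {R : Type*} [CommRing R] (H : HeavenlySetting R) (P : LaxPair R)

/-- The coefficient of `z^n` in `S^{j+1}`. -/
def coeffS (j : Fin 2) (n : ℤ) : R :=
  if 0 ≤ n then H.t j n.toNat else P.Sneg j (-n - 1).toNat

/-- The series `∂^{a+1}_m S^{j+1}` (its `z`-exponents are bounded above since
`∂^{a+1}_m t^{j+1}_n = δ_{aj} δ_{mn}`). -/
def dS (a : Fin 2) (m : ℕ) (j : Fin 2) : LS R :=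
  HahnSeries.single (-(m : ℤ)) (if a = j then 1 else 0)
    + tail fun k => H.d a m (P.Sneg j k)

/-- `S^{j+1}_x = ∂^1_0 S^{j+1}`. -/
def Sx (j : Fin 2) : LS R := H.dS P 0 0 j

/-- `S^{j+1}_y = ∂^2_0 S^{j+1}`. -/
def Sy (j : Fin 2) : LS R := H.dS P 1 0 j

/-- The condition `(dS^1 ∧ dS^2)_- = 0`. -/
def WedgeMinusZero : Prop :=
  ∀ a b : Fin 2, ∀ m n : ℕ,
    truncMinus (H.dS P a m 0 * H.dS P b n 1 - H.dS P b n 0 * H.dS P a m 1) = 0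

/-- The Lax–Sato equations `∂^1_n S^j = -{(z^n S^2)_+, S^j}`,
`∂^2_n S^j = {(z^n S^1)_+, S^j}` together with the bracket `{S^1,S^2} = 1`;
here `{f,g} = f_x g_y - f_y g_x` and `((z^n S^k)_+)_x = (z^n (S^k)_x)_+` etc. -/
def LaxSatoEqs : Prop :=
  (∀ n : ℕ, ∀ j : Fin 2,
    H.dS P 0 n j =
      -(truncPlus (zz ^ n * H.Sx P 1) * H.Sy P j
        - truncPlus (zz ^ n * H.Sy P 1) * H.Sx P j)) ∧
  (∀ n : ℕ, ∀ j : Fin 2,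
    H.dS P 1 n j =
      truncPlus (zz ^ n * H.Sx P 0) * H.Sy P j
        - truncPlus (zz ^ n * H.Sy P 0) * H.Sx P j) ∧
  (H.Sx P 0 * H.Sy P 1 - H.Sy P 0 * H.Sx P 1 = 1)

/-- Coefficient of `z'^k` in `D^{a+1}(z') S^{j+1}(z) = Σ_{m≥0} z'^{-m-1} ∂^{a+1}_m S^{j+1}(z)`. -/
def Dc (a j : Fin 2) (k : ℤ) : LS R :=
  if k ≤ -1 then H.dS P a (-k - 1).toNat j else 0

/-- Generating Lax–Sato equations
`(z'-z) D^1(z') S^j(z) = -{S^2(z'), S^j(z)}` and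
`(z'-z) D^2(z') S^j(z) = {S^1(z'), S^j(z)}`, stated coefficientwise in `z'`
(`k : ℤ` being the `z'`-exponent; both sides of each equation are series in `z`). -/
def GenLaxSato : Prop :=
  (∀ j : Fin 2, ∀ k : ℤ,
    H.Dc P 0 j (k - 1) - zz * H.Dc P 0 j k =
      -(CC (H.d 0 0 (H.coeffS P 1 k)) * H.Sy P j
        - CC (H.d 1 0 (H.coeffS P 1 k)) * H.Sx P j)) ∧
  (∀ j : Fin 2, ∀ k : ℤ,
    H.Dc P 1 j (k - 1) - zz * H.Dc P 1 j k =
      CC (H.d 0 0 (H.coeffS P 0 k)) * H.Sy P j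
        - CC (H.d 1 0 (H.coeffS P 0 k)) * H.Sx P j)

/-- `Θ` is a τ-function for the pair: `S^1_{n+1} = -∂^2_n Θ`, `S^2_{n+1} = ∂^1_n Θ`. -/
def IsTau (Θ : R) : Prop :=
  ∀ n : ℕ, P.Sneg 0 n = -H.d 1 n Θ ∧ P.Sneg 1 n = H.d 0 n Θ

/-- `σ` is a wave function with constant parameter `p`:
`(z-p) D^1(z)σ = -{S^2(z), σ}` and `(z-p) D^2(z)σ = {S^1(z), σ}`,
coefficientwise in `z^{-1}`, with `p` annihilated by all derivations. -/
def IsWave (σ p : R) : Prop :=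
  (∀ a : Fin 2, ∀ n : ℕ, H.d a n p = 0) ∧
  ((zz - CC p) * tail (fun n => H.d 0 n σ) =
    -(H.Sx P 1 * CC (H.d 1 0 σ) - H.Sy P 1 * CC (H.d 0 0 σ))) ∧
  ((zz - CC p) * tail (fun n => H.d 1 n σ) =
    H.Sx P 0 * CC (H.d 1 0 σ) - H.Sy P 0 * CC (H.d 0 0 σ))

end HeavenlySetting

/-!
With `{f, g} = f_x g_y - f_y g_x`, the linearized heavenly operator applied to `σ` is
`{D^1(z)σ, S^1} + {D^2(z)σ, S^2}`. Multiplying by the constant `z - p` and inserting the wave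
equations turns it into `{{σ, S^2}, S^1} + {{S^1, σ}, S^2}`, which by the Jacobi identity equals
`{{S^1, S^2}, σ}`; this vanishes because `{S^1, S^2} = 1`, and `z - p` is invertible.

The normalization `{S^1, S^2} = 1` is the value at `z' = z` of the equation
`(z' - z) D^1(z') S^1(z) = {S^1(z), S^2(z')}`, since `D^1(z') S^1(z)` is `1 / (z' - z)` plus a
series without pole at `z' = z`.
-/

theorem hahnSeries_map_derivation_mul {Γ k R : Type*} [AddCommMonoid Γ] [PartialOrder Γ]
    [IsOrderedCancelAddMonoid Γ] [CommSemiring k] [CommSemiring R] [Algebra k R]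
    (D : Derivation k R R) (A B : HahnSeries Γ R) :
    (A * B).map D = A * B.map D + B * A.map D := by
  ext n
  have hA : (A.map D).support ⊆ A.support := fun m => mt fun hm => by simp [hm]
  have hB : (B.map D).support ⊆ B.support := fun m => mt fun hm => by simp [hm]
  rw [mul_comm B, HahnSeries.map_coeff, HahnSeries.coeff_add, HahnSeries.coeff_mul,
    HahnSeries.coeff_mul_right' B.isPWO_support hB,
    HahnSeries.coeff_mul_left' A.isPWO_support hA, map_sum, ← Finset.sum_add_distrib]
  refine Finset.sum_congr rfl fun ij _ => ?_
  rw [D.leibniz, smul_eq_mul, smul_eq_mul, HahnSeries.map_coeff, HahnSeries.map_coeff,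
    mul_comm (B.coeff _)]

namespace PlanarPoisson

/-- The Poisson bracket `f_x g_y - f_y g_x`, as a function of the gradients `u = (f_x, f_y)` and
`v = (g_x, g_y)`. Brackets with `S^j(z)` make sense in this form although `S^j(z)`, being infinite
in both directions, is not an element of `LS R`. -/
def bracket {A : Type*} [CommRing A] (u v : Fin 2 → A) : A := u 0 * v 1 - u 1 * v 0

section Bracket

variable {A : Type*} [CommRing A]

theorem bracket_swap (u v : Fin 2 → A) : bracket u v = -bracket v u := by
  simp only [bracket]
  ring

theorem bracket_neg_left (u v : Fin 2 → A) : bracket (-u) v = -bracket u v := by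
  simp only [bracket, Pi.neg_apply]
  ring

theorem bracket_smul_left (c : A) (u v : Fin 2 → A) : bracket (c • u) v = c * bracket u v := by
  simp only [bracket, Pi.smul_apply, smul_eq_mul]
  ring

theorem bracket_zero_left (v : Fin 2 → A) : bracket 0 v = 0 := by
  simp [bracket]

end Bracket

variable {k A : Type*} [CommRing k] [CommRing A] [Algebra k A] (D : Fin 2 → Derivation k A A)

/-- The gradient `(f_x, f_y)` with respect to the derivations `D 0 = ∂_x` and `D 1 = ∂_y`. -/
def grad (f : A) : Fin 2 → A := fun i => D i f

/-- The condition `∂_y u_0 = ∂_x u_1` that the 1-form `u_0 dx + u_1 dy` be closed. -/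
def IsClosedForm (u : Fin 2 → A) : Prop := D 1 (u 0) = D 0 (u 1)

theorem grad_neg (f : A) : grad D (-f) = -grad D f :=
  funext fun i => map_neg (D i) f

theorem grad_one : grad D 1 = 0 :=
  funext fun i => (D i).map_one_eq_zero

theorem grad_mul_of_grad_eq_zero {c : A} (hc : grad D c = 0) (f : A) :
    grad D (c * f) = c • grad D f := by
  ext i
  have hci : D i c = 0 := congrFun hc i
  simp only [grad, Pi.smul_apply, Derivation.leibniz, hci, smul_zero, add_zero]

variable {D}

theorem isClosedForm_grad (hD : ∀ a, D 1 (D 0 a) = D 0 (D 1 a)) (f : A) :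
    IsClosedForm D (grad D f) :=
  hD f

theorem isClosedForm_single_one (j : Fin 2) : IsClosedForm D (Pi.single j 1) := by
  simp only [IsClosedForm, Pi.single_apply, apply_ite (D _), Derivation.map_one_eq_zero, map_zero,
    ite_self]

theorem IsClosedForm.add {u v : Fin 2 → A} (hu : IsClosedForm D u) (hv : IsClosedForm D v) :
    IsClosedForm D (u + v) := by
  simpa only [IsClosedForm, Pi.add_apply, map_add] using congrArg₂ (· + ·) hu hv

theorem bracket_jacobi {u v w : Fin 2 → A} (hu : IsClosedForm D u) (hv : IsClosedForm D v)
    (hw : IsClosedForm D w) :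
    bracket (grad D (bracket u v)) w + bracket (grad D (bracket v w)) u
      + bracket (grad D (bracket w u)) v = 0 := by
  simp only [IsClosedForm] at hu hv hw
  simp only [bracket, grad, map_sub, Derivation.leibniz, smul_eq_mul, hu, hv, hw]
  ring

end PlanarPoisson

section NegativePowers

variable {R : Type*} [CommRing R]

/-- The variable `z⁻¹`. -/
def zinv : LS R := HahnSeries.single (1 : ℤ) (1 : R)

theorem zz_mul_zinv : (zz : LS R) * zinv = 1 := by
  rw [zz, zinv, HahnSeries.single_mul_single, neg_add_cancel, one_mul]
  rfl

theorem ofPowerSeries_X_eq_zinv : HahnSeries.ofPowerSeries ℤ R PowerSeries.X = zinv :=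
  HahnSeries.ofPowerSeries_X

theorem coeff_tail (g : ℕ → R) (n : ℤ) :
    (tail g).coeff n = if n - 1 < 0 then 0 else g (n - 1).natAbs := by
  rw [tail, HahnSeries.coeff_single_mul, one_mul, PowerSeries.coeff_coe, PowerSeries.coeff_mk]

theorem tail_eq_zinv_mul (g : ℕ → R) :
    tail g = zinv * (CC (g 0) + tail fun n => g (n + 1)) := by
  have hshift : PowerSeries.mk g =
      PowerSeries.X * (PowerSeries.mk fun n => g (n + 1)) + PowerSeries.C (g 0) := by
    simpa using PowerSeries.eq_X_mul_shift_add_const (PowerSeries.mk g)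
  rw [tail, hshift, map_add, map_mul, ofPowerSeries_X_eq_zinv, HahnSeries.ofPowerSeries_C,
    add_comm]
  rfl

theorem tail_neg (g : ℕ → R) : tail (-g) = -tail g := by
  rw [tail, tail, show PowerSeries.mk (-g) = -PowerSeries.mk g from rfl, map_neg, mul_neg]

theorem tail_const_mul (r : R) (g : ℕ → R) : (tail fun n => r * g n) = CC r * tail g := by
  have hmk : (PowerSeries.mk fun n => r * g n) = PowerSeries.C r * PowerSeries.mk g := by
    ext n
    simp
  rw [tail, tail, hmk, map_mul, HahnSeries.ofPowerSeries_C, CC, mul_left_comm]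

theorem zz_sub_CC_mul_geom (v : R) : (zz - CC v) * geom v = 1 := by
  have hgeom : geom v = zinv * (1 + CC v * geom v) := by
    conv_lhs => rw [geom, tail_eq_zinv_mul]
    simp only [pow_zero, pow_succ', tail_const_mul, geom, CC, map_one]
  linear_combination zz * hgeom + (1 + CC v * geom v) * zz_mul_zinv (R := R)

theorem isUnit_zz_sub_CC (v : R) : IsUnit (zz - CC v : LS R) :=
  IsUnit.of_mul_eq_one _ (zz_sub_CC_mul_geom v)

theorem tail_mem_range_ofPowerSeries (g : ℕ → R) :
    tail g ∈ (HahnSeries.ofPowerSeries ℤ R).range :=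
  ⟨PowerSeries.X * PowerSeries.mk g, by rw [map_mul, HahnSeries.ofPowerSeries_X, tail]⟩

theorem eq_zero_of_forall_eq_zinv_pow_mul {A : LS R}
    (h : ∀ m : ℕ, ∃ E ∈ (HahnSeries.ofPowerSeries ℤ R).range, A = zinv ^ m * E) : A = 0 := by
  have hdvd (m : ℕ) : ∃ f : PowerSeries R,
      A = HahnSeries.ofPowerSeries ℤ R (PowerSeries.X ^ m * f) := by
    obtain ⟨_, ⟨f, rfl⟩, hA⟩ := h m
    exact ⟨f, by rw [hA, map_mul, map_pow, ofPowerSeries_X_eq_zinv]⟩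
  obtain ⟨f, hf⟩ := hdvd 0
  have hf_zero : PowerSeries.X ^ 0 * f = 0 := by
    ext n
    obtain ⟨g, hg⟩ := hdvd (n + 1)
    rw [HahnSeries.ofPowerSeries_injective (hf.symm.trans hg)]
    exact PowerSeries.X_pow_dvd_iff.mp (dvd_mul_right _ g) n n.lt_succ_self
  rw [hf, hf_zero, map_zero]

end NegativePowers

namespace HeavenlySetting

open PlanarPoisson

variable {R : Type*} [CommRing R] (H : HeavenlySetting R) (P : LaxPair R)

/-- The map `∂^{a+1}_n` as a bundled derivation. -/
def deriv (a : Fin 2) (n : ℕ) : Derivation ℤ R R :=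
  Derivation.mk' (AddMonoidHom.mk' (H.d a n) (H.d_add a n)).toIntLinearMap
    fun f g => by simp [H.d_mul, mul_comm]

@[simp]
theorem deriv_apply (a : Fin 2) (n : ℕ) (f : R) : H.deriv a n f = H.d a n f := rfl

/- Without this line instance search finds `HahnSeries.powerSeriesAlgebra ℤ R` for
`Algebra ℤ (LS R)`, whose scalar action is not reducibly the one of the additive group. -/
attribute [local instance] Ring.toIntAlgebra

/-- The derivations `∂_x` (at `0`) and `∂_y` (at `1`) of `LS R`, acting coefficientwise. -/
def partialLS (i : Fin 2) : Derivation ℤ (LS R) (LS R) :=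
  Derivation.mk'
    (AddMonoidHom.mk' (fun A : LS R => A.map (H.deriv i 0)) fun A B => by
      ext; simp [H.d_add]).toIntLinearMap
    (hahnSeries_map_derivation_mul (H.deriv i 0))

@[simp]
theorem coeff_partialLS (i : Fin 2) (A : LS R) (n : ℤ) :
    (H.partialLS i A).coeff n = H.d i 0 (A.coeff n) := rfl

theorem partialLS_comm (A : LS R) :
    H.partialLS 1 (H.partialLS 0 A) = H.partialLS 0 (H.partialLS 1 A) := by
  ext n
  exact H.d_comm 1 0 0 0 _

theorem partialLS_single (i : Fin 2) (n : ℤ) (r : R) :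
    H.partialLS i (HahnSeries.single n r) = HahnSeries.single n (H.d i 0 r) :=
  HahnSeries.map_single (H.deriv i 0 : ZeroHom R R)

theorem partialLS_CC (i : Fin 2) (r : R) : H.partialLS i (CC r) = CC (H.d i 0 r) :=
  H.partialLS_single i 0 r

theorem partialLS_tail (i : Fin 2) (g : ℕ → R) :
    H.partialLS i (tail g) = tail fun n => H.d i 0 (g n) := by
  ext n
  rw [coeff_partialLS, coeff_tail, coeff_tail, ← deriv_apply, apply_ite (H.deriv i 0), map_zero,
    deriv_apply]

theorem grad_zz : grad H.partialLS zz = 0 := by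
  ext1 i
  rw [grad, zz, partialLS_single, ← deriv_apply, Derivation.map_one_eq_zero, map_zero]
  rfl

/-- The gradient `(S^{j+1}_x, S^{j+1}_y)`. -/
def gradS (j : Fin 2) : Fin 2 → LS R := fun i => H.dS P i 0 j

theorem gradS_apply (j i : Fin 2) :
    H.gradS P j i = (if i = j then 1 else 0) + tail fun n => H.d i 0 (P.Sneg j n) := by
  rw [gradS, dS, apply_ite (HahnSeries.single _), map_zero]
  rfl

theorem gradS_eq_add_grad (j : Fin 2) :
    H.gradS P j = Pi.single j 1 + grad H.partialLS (tail (P.Sneg j)) := by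
  ext1 i
  rw [gradS_apply, Pi.add_apply, grad, partialLS_tail, Pi.single_apply]

theorem isClosedForm_gradS (j : Fin 2) : IsClosedForm H.partialLS (H.gradS P j) := by
  rw [gradS_eq_add_grad]
  exact (isClosedForm_single_one j).add (isClosedForm_grad H.partialLS_comm _)

theorem gradS_mem_range_ofPowerSeries (j i : Fin 2) :
    H.gradS P j i ∈ (HahnSeries.ofPowerSeries ℤ R).range :=
  add_mem ⟨PowerSeries.C (if i = j then 1 else 0), HahnSeries.ofPowerSeries_C _⟩
    (tail_mem_range_ofPowerSeries _)

variable {H P}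

theorem GenLaxSato.tail_recursion (hgen : H.GenLaxSato P) (m : ℕ) :
    (tail fun k => H.d 0 (m + 1) (P.Sneg 0 k)) - zz * tail (fun k => H.d 0 m (P.Sneg 0 k)) =
      CC (H.d 1 0 (P.Sneg 1 m)) * H.gradS P 0 0 - CC (H.d 0 0 (P.Sneg 1 m)) * H.gradS P 0 1 := by
  have h := hgen.1 0 (-(m : ℤ) - 1)
  rw [Dc, Dc, if_pos (by omega), if_pos (by omega), coeffS, if_neg (by omega),
    show (-(-(m : ℤ) - 1 - 1) - 1).toNat = m + 1 by omega,
    show (-(-(m : ℤ) - 1) - 1).toNat = m by omega, dS, dS] at h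
  have hpow : (HahnSeries.single (-((m + 1 : ℕ) : ℤ)) 1 : LS R) =
      zz * HahnSeries.single (-(m : ℤ)) 1 := by
    rw [zz, HahnSeries.single_mul_single, one_mul]
    congr 2
    omega
  simp only [if_true, hpow, Sx, Sy] at h
  simp only [gradS]
  linear_combination h

/-- Iterating the recursion in `m` shows that `{S^1, S^2} - 1` is divisible by every power of
`z⁻¹`. -/
theorem GenLaxSato.bracket_gradS_sub_one_eq (hgen : H.GenLaxSato P) (m : ℕ) :
    bracket (H.gradS P 0) (H.gradS P 1) - 1 =
      zinv ^ m * ((tail fun k => H.d 0 m (P.Sneg 0 k))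
        + (tail fun k => H.d 1 0 (P.Sneg 1 (k + m))) * H.gradS P 0 0
        - (tail fun k => H.d 0 0 (P.Sneg 1 (k + m))) * H.gradS P 0 1) := by
  induction m with
  | zero =>
    simp only [bracket, gradS_apply, add_zero, pow_zero, Fin.isValue, if_true, one_ne_zero,
      zero_ne_one, if_false]
    ring
  | succ m ih =>
    rw [ih, tail_eq_zinv_mul fun k => H.d 1 0 (P.Sneg 1 (k + m)),
      tail_eq_zinv_mul fun k => H.d 0 0 (P.Sneg 1 (k + m))]
    simp only [zero_add, add_right_comm _ 1 m, add_assoc _ m 1]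
    linear_combination -zinv ^ (m + 1) * hgen.tail_recursion m
      - zinv ^ m * tail (fun k => H.d 0 m (P.Sneg 0 k)) * zz_mul_zinv (R := R)

theorem GenLaxSato.bracket_gradS_eq_one (hgen : H.GenLaxSato P) :
    bracket (H.gradS P 0) (H.gradS P 1) = 1 := by
  refine sub_eq_zero.mp (eq_zero_of_forall_eq_zinv_pow_mul fun m => ⟨_, ?_,
    hgen.bracket_gradS_sub_one_eq m⟩)
  exact sub_mem
    (add_mem (tail_mem_range_ofPowerSeries _)
      (mul_mem (tail_mem_range_ofPowerSeries _) (H.gradS_mem_range_ofPowerSeries P 0 0)))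
    (mul_mem (tail_mem_range_ofPowerSeries _) (H.gradS_mem_range_ofPowerSeries P 0 1))

theorem IsWave.grad_zz_sub_CC {σ p : R} (hwave : H.IsWave P σ p) :
    grad H.partialLS (zz - CC p) = 0 := by
  ext1 i
  have hz : H.partialLS i zz = 0 := congrFun H.grad_zz i
  have hp : H.partialLS i (CC p) = 0 := by rw [partialLS_CC, hwave.1, CC, map_zero]
  rw [grad, map_sub, hz, hp, sub_zero]
  rfl

theorem IsWave.mul_tail_fst {σ p : R} (hwave : H.IsWave P σ p) :
    (zz - CC p) * tail (fun n => H.d 0 n σ) =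
      -bracket (H.gradS P 1) (grad H.partialLS (CC σ)) := by
  simpa only [bracket, grad, partialLS_CC, gradS, Sx, Sy] using hwave.2.1

theorem IsWave.mul_tail_snd {σ p : R} (hwave : H.IsWave P σ p) :
    (zz - CC p) * tail (fun n => H.d 1 n σ) =
      bracket (H.gradS P 0) (grad H.partialLS (CC σ)) := by
  simpa only [bracket, grad, partialLS_CC, gradS, Sx, Sy] using hwave.2.2

theorem IsWave.bracket_add_bracket_eq_zero {σ p : R} (hwave : H.IsWave P σ p)
    (hbracket : bracket (H.gradS P 0) (H.gradS P 1) = 1) :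
    bracket (grad H.partialLS (tail fun n => H.d 0 n σ)) (H.gradS P 0)
      + bracket (grad H.partialLS (tail fun n => H.d 1 n σ)) (H.gradS P 1) = 0 := by
  set S := H.gradS P
  set dσ := grad H.partialLS (CC σ)
  have hjacobi := bracket_jacobi (H.isClosedForm_gradS P 0) (H.isClosedForm_gradS P 1)
    (isClosedForm_grad H.partialLS_comm (CC σ))
  refine (isUnit_zz_sub_CC p).mul_left_cancel ?_
  calc (zz - CC p) * (bracket (grad H.partialLS (tail fun n => H.d 0 n σ)) (S 0)
        + bracket (grad H.partialLS (tail fun n => H.d 1 n σ)) (S 1))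
      = bracket (grad H.partialLS (-bracket (S 1) dσ)) (S 0)
        + bracket (grad H.partialLS (bracket (S 0) dσ)) (S 1) := by
        rw [← hwave.mul_tail_fst, ← hwave.mul_tail_snd,
          grad_mul_of_grad_eq_zero _ hwave.grad_zz_sub_CC,
          grad_mul_of_grad_eq_zero _ hwave.grad_zz_sub_CC, bracket_smul_left, bracket_smul_left,
          mul_add]
    _ = -(bracket (grad H.partialLS (bracket (S 1) dσ)) (S 0)
        + bracket (grad H.partialLS (bracket dσ (S 0))) (S 1)) := by
        rw [bracket_swap (S 0) dσ, grad_neg, grad_neg, bracket_neg_left, bracket_neg_left,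
          neg_add]
    _ = bracket (grad H.partialLS (bracket (S 0) (S 1))) dσ := by
        linear_combination -hjacobi
    _ = (zz - CC p) * 0 := by
        rw [hbracket, grad_one, bracket_zero_left, mul_zero]

theorem IsTau.gradS_fst {Θ : R} (hτ : H.IsTau P Θ) :
    H.gradS P 0 = Pi.single 0 1 - grad H.partialLS (tail fun n => H.d 1 n Θ) := by
  have hS : P.Sneg 0 = -fun n => H.d 1 n Θ := funext fun n => (hτ n).1
  rw [gradS_eq_add_grad, hS, tail_neg, grad_neg, sub_eq_add_neg]

theorem IsTau.gradS_snd {Θ : R} (hτ : H.IsTau P Θ) :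
    H.gradS P 1 = Pi.single 1 1 + grad H.partialLS (tail fun n => H.d 0 n Θ) := by
  rw [gradS_eq_add_grad, show P.Sneg 1 = fun n => H.d 0 n Θ from funext fun n => (hτ n).2]

end HeavenlySetting

theorem heavenly_wave_is_symmetry_general {R : Type*} [CommRing R]
    (H : HeavenlySetting R) (P : LaxPair R) (Θ : R)
    (hbracket : H.Sx P 0 * H.Sy P 1 - H.Sy P 0 * H.Sx P 1 = 1) (hτ : H.IsTau P Θ)
    (σ p : R) (hwave : H.IsWave P σ p) :
    tail (fun n => H.d 1 n (H.d 0 0 σ)) - tail (fun n => H.d 0 n (H.d 1 0 σ))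
      - (tail (fun n => H.d 0 0 (H.d 0 n σ)) * tail (fun n => H.d 1 0 (H.d 1 n Θ))
         - tail (fun n => H.d 1 0 (H.d 0 n σ)) * tail (fun n => H.d 0 0 (H.d 1 n Θ)))
      - (tail (fun n => H.d 0 0 (H.d 0 n Θ)) * tail (fun n => H.d 1 0 (H.d 1 n σ))
         - tail (fun n => H.d 1 0 (H.d 0 n Θ)) * tail (fun n => H.d 0 0 (H.d 1 n σ))) = 0 := by
  have h := hwave.bracket_add_bracket_eq_zero hbracket
  rw [hτ.gradS_fst, hτ.gradS_snd] at h
  simp only [PlanarPoisson.bracket, PlanarPoisson.grad, HeavenlySetting.partialLS_tail,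
    Pi.add_apply, Pi.sub_apply, Pi.single_apply, if_true, one_ne_zero, zero_ne_one, if_false] at h
  simp only [H.d_comm 1 _ 0 0 σ, H.d_comm 0 _ 1 0 σ]
  linear_combination h

/-- If the pair satisfies the generating Lax–Sato equations and
admits a τ-function `Θ`, and `σ` is a wave function with constant parameter `p`,
then `δΘ = σ` is an infinitesimal symmetry:
`D^2(z)σ_x - D^1(z)σ_y - {D^1(z)σ, D^2(z)Θ} - {D^1(z)Θ, D^2(z)σ} = 0`
coefficientwise in `z^{-1}`. -/
theorem heavenly_wave_is_symmetry {R : Type*} [CommRing R]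
    (H : HeavenlySetting R) (P : LaxPair R) (Θ : R)
    (hgen : H.GenLaxSato P) (hτ : H.IsTau P Θ)
    (σ p : R) (hwave : H.IsWave P σ p) :
    tail (fun n => H.d 1 n (H.d 0 0 σ)) - tail (fun n => H.d 0 n (H.d 1 0 σ))
      - (tail (fun n => H.d 0 0 (H.d 0 n σ)) * tail (fun n => H.d 1 0 (H.d 1 n Θ))
         - tail (fun n => H.d 1 0 (H.d 0 n σ)) * tail (fun n => H.d 0 0 (H.d 1 n Θ)))
      - (tail (fun n => H.d 0 0 (H.d 0 n Θ)) * tail (fun n => H.d 1 0 (H.d 1 n σ))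
         - tail (fun n => H.d 1 0 (H.d 0 n Θ)) * tail (fun n => H.d 0 0 (H.d 1 n σ))) = 0 :=
  heavenly_wave_is_symmetry_general H P Θ hgen.bracket_gradS_eq_one hτ σ p hwave
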